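/- Let y be a nonzero real number and let (μ_n) be a sequence of reals such that the sequence (μ_n · y) is equidistributed modulo 1. Then (1/N) · #{0 ≤ n < N : sgn(cos(2π · 3μ_n y)) = sgn(cos(2π · μ_n y))} → 1/3 as N → ∞. (This shows the lower bound 1/3 in the universality law for sign correlations is attained.) -/

import Mathlib

/-!
Put `θ = 2πx`. Since `cos 3θ = cos θ · (2 cos 2θ - 1)`, the signs of `cos 3θ` and `cos θ` differ
exactly when `cos θ ≠ 0` and `cos 2θ ≤ 1/2`, that is, when the fractional part of `2x` lies in
`[1/6, 5/6]` and is not `1/2`. If a sequence is equidistributed modulo 1, then so is its double,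
hence the signs differ with frequency `5/6 - 1/6 = 2/3`.
-/

open Filter Real MeasureTheory
open scoped Classical

noncomputable def sgn (t : ℝ) : ℝ := if 0 < t then 1 else if t < 0 then -1 else 0

def EquidistributedMod1 (a : ℕ → ℝ) : Prop :=
  ∀ c d : ℝ, 0 ≤ c → c ≤ d → d ≤ 1 →
    Tendsto (fun N : ℕ =>
      (((Finset.range N).filter (fun n => Int.fract (a n) ∈ Set.Icc c d)).card : ℝ) / N)
      atTop (nhds (d - c))

/-- The set `s` of natural numbers has natural (asymptotic) density `δ`: the limit is required to
exist, and membership in `s` is decided classically. -/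
def HasNaturalDensity (s : Set ℕ) (δ : ℝ) : Prop :=
  Tendsto (fun N : ℕ => (((Finset.range N).filter (· ∈ s)).card : ℝ) / N) atTop (nhds δ)

theorem hasNaturalDensity_setOf_iff {p : ℕ → Prop} [DecidablePred p] {δ : ℝ} :
    HasNaturalDensity {n | p n} δ ↔
      Tendsto (fun N : ℕ => (((Finset.range N).filter p).card : ℝ) / N) atTop (nhds δ) := by
  simp only [HasNaturalDensity, Set.mem_ofPred_eq]

namespace HasNaturalDensity

variable {s t : Set ℕ} {δ ε : ℝ}

theorem empty : HasNaturalDensity ∅ 0 := by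
  simp [HasNaturalDensity]

theorem univ : HasNaturalDensity Set.univ 1 := by
  refine tendsto_const_nhds.congr' ?_
  filter_upwards [eventually_ne_atTop 0] with N hN
  simp [hN]

theorem diff (hs : HasNaturalDensity s δ) (ht : HasNaturalDensity t ε) (hts : t ⊆ s) :
    HasNaturalDensity (s \ t) (δ - ε) := by
  refine (Tendsto.sub hs ht).congr fun N => ?_
  have hsub : (Finset.range N).filter (· ∈ t) ⊆ (Finset.range N).filter (· ∈ s) :=
    Finset.monotone_filter_right _ fun _ _ h => hts h
  rw [← sub_div, ← Finset.cast_card_sdiff hsub]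
  congr 3
  ext n
  simp only [Set.mem_sdiff, Finset.mem_filter, Finset.mem_sdiff]
  tauto

theorem compl (hs : HasNaturalDensity s δ) : HasNaturalDensity sᶜ (1 - δ) := by
  rw [Set.compl_eq_univ_sdiff]
  exact univ.diff hs (Set.subset_univ s)

theorem biUnion_finset {ι : Type*} {I : Finset ι} {u : ι → Set ℕ} {δ : ι → ℝ}
    (hdisj : (I : Set ι).PairwiseDisjoint u) (hu : ∀ i ∈ I, HasNaturalDensity (u i) (δ i)) :
    HasNaturalDensity (⋃ i ∈ I, u i) (∑ i ∈ I, δ i) := by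
  refine (tendsto_finsetSum I hu).congr fun N => ?_
  have hunion : (Finset.range N).filter (· ∈ ⋃ i ∈ I, u i) =
      I.biUnion fun i => (Finset.range N).filter (· ∈ u i) := by
    ext n
    simp only [Set.mem_iUnion, Finset.mem_filter, Finset.mem_biUnion]
    tauto
  rw [hunion, Finset.card_biUnion, Nat.cast_sum, Finset.sum_div]
  exact fun i hi j hj hij => Finset.disjoint_filter.2 fun n _ hni hnj =>
    Set.disjoint_left.1 (hdisj hi hj hij) hni hnj

end HasNaturalDensity

theorem equidistributedMod1_iff_hasNaturalDensity {a : ℕ → ℝ} :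
    EquidistributedMod1 a ↔ ∀ c d : ℝ, 0 ≤ c → c ≤ d → d ≤ 1 →
      HasNaturalDensity {n | Int.fract (a n) ∈ Set.Icc c d} (d - c) := by
  simp only [EquidistributedMod1, hasNaturalDensity_setOf_iff]

theorem equidistributedMod1_of_forall_lt_one {a : ℕ → ℝ}
    (ha : ∀ c d : ℝ, 0 ≤ c → c ≤ d → d < 1 →
      HasNaturalDensity {n | Int.fract (a n) ∈ Set.Icc c d} (d - c)) :
    EquidistributedMod1 a := by
  refine equidistributedMod1_iff_hasNaturalDensity.2 fun c d hc hcd hd => ?_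
  obtain hd | rfl := hd.lt_or_eq
  · exact ha c d hc hcd hd
  obtain hc1 | rfl := hcd.lt_or_eq
  · -- Fractional parts never reach `1`, so `[c, 1]` is the complement of `[0, c) = [0, c] \ {c}`.
    have hIco := (ha 0 c le_rfl hc hc1).diff (ha c c hc le_rfl hc1)
      fun n hn => Set.Icc_subset_Icc_left hc hn
    convert hIco.compl using 1
    · ext n
      have := Int.fract_nonneg (a n)
      have := Int.fract_lt_one (a n)
      simp only [Set.mem_compl_iff, Set.mem_sdiff, Set.mem_ofPred_eq, Set.mem_Icc]
      grind
    · ring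
  · convert HasNaturalDensity.empty using 1
    · ext n
      simp [(Int.fract_lt_one (a n)).ne]
    · ring

theorem mem_Icc_add_div_iff_floor_eq_and_fract_mem {K : Type*} [Field K] [LinearOrder K]
    [IsStrictOrderedRing K] [FloorRing K] {k c d : K} (hk : 0 < k) (hc : 0 ≤ c) (hd : d < 1)
    (t : K) (j : ℤ) :
    t ∈ Set.Icc ((j + c) / k) ((j + d) / k) ↔ ⌊k * t⌋ = j ∧ Int.fract (k * t) ∈ Set.Icc c d := by
  simp only [Set.mem_Icc, div_le_iff₀' hk, le_div_iff₀' hk, Int.floor_eq_iff, Int.fract]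
  constructor
  · rintro ⟨hl, hr⟩
    have hfloor : ⌊k * t⌋ = j := Int.floor_eq_iff.2 ⟨by linarith, by linarith⟩
    rw [hfloor]
    refine ⟨⟨?_, ?_⟩, ?_, ?_⟩ <;> linarith
  · rintro ⟨hj, hl, hr⟩
    rw [Int.floor_eq_iff.2 hj] at hl hr
    constructor <;> linarith

section FractNatCastMul

variable {R : Type*} [Ring R] [LinearOrder R] [IsStrictOrderedRing R] [FloorRing R]

theorem floor_natCast_mul_fract_mem_Ico {k : ℕ} (hk : k ≠ 0) (x : R) :
    ⌊k * Int.fract x⌋ ∈ Set.Ico (0 : ℤ) k := by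
  have hk : (0 : R) < k := mod_cast Nat.pos_of_ne_zero hk
  refine ⟨Int.floor_nonneg.2 (mul_nonneg hk.le (Int.fract_nonneg x)), Int.floor_lt.2 ?_⟩
  simpa using mul_lt_mul_of_pos_left (Int.fract_lt_one x) hk

theorem fract_natCast_mul_fract (k : ℕ) (x : R) :
    Int.fract (k * Int.fract x) = Int.fract (k * x) :=
  Int.fract_eq_fract.2 ⟨-(k * ⌊x⌋), by rw [Int.fract, mul_sub]; push_cast; abel⟩

end FractNatCastMul

namespace EquidistributedMod1

variable {a : ℕ → ℝ}

theorem hasNaturalDensity_fract_eq (ha : EquidistributedMod1 a) (x : ℝ) :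
    HasNaturalDensity {n | Int.fract (a n) = x} 0 := by
  by_cases hx : x ∈ Set.Ico 0 1
  · simpa using equidistributedMod1_iff_hasNaturalDensity.1 ha x x hx.1 le_rfl hx.2.le
  · convert HasNaturalDensity.empty using 1
    refine Set.eq_empty_of_forall_notMem fun n hn => hx ?_
    rw [← hn.out]
    exact ⟨Int.fract_nonneg _, Int.fract_lt_one _⟩

theorem natCast_mul (ha : EquidistributedMod1 a) {k : ℕ} (hk : k ≠ 0) :
    EquidistributedMod1 fun n => k * a n := by
  have hk' : (0 : ℝ) < k := by positivity
  refine equidistributedMod1_of_forall_lt_one fun c d hc hcd hd => ?_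
  -- The preimage of `[c, d]` under `t ↦ fract (k t)` on `[0, 1)` consists of the `k` intervals
  -- `[(j + c) / k, (j + d) / k]`, which are disjoint because `d < 1`.
  have hpiece (j n : ℕ) :
      Int.fract (a n) ∈ Set.Icc ((j + c) / k) ((j + d) / k) ↔
        ⌊k * Int.fract (a n)⌋ = j ∧ Int.fract (k * a n) ∈ Set.Icc c d := by
    rw [← fract_natCast_mul_fract, ← mem_Icc_add_div_iff_floor_eq_and_fract_mem hk' hc hd,
      Int.cast_natCast]
  have hunion : {n | Int.fract (k * a n) ∈ Set.Icc c d} = ⋃ j ∈ Finset.range k,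
      {n | Int.fract (a n) ∈ Set.Icc ((j + c) / k) ((j + d) / k)} := by
    ext n
    have hfloor := floor_natCast_mul_fract_mem_Ico hk (a n)
    lift ⌊k * Int.fract (a n)⌋ to ℕ using hfloor.1 with m hm
    simp only [Set.mem_iUnion, Set.mem_ofPred_eq, hpiece, ← hm, Finset.mem_range]
    grind
  have hdisj : (Finset.range k : Set ℕ).PairwiseDisjoint
      fun j : ℕ => {n | Int.fract (a n) ∈ Set.Icc ((j + c) / k) ((j + d) / k)} :=
    fun i _ j _ hij => Set.disjoint_left.2 fun n hi hj =>
      hij (Nat.cast_injective (((hpiece i n).1 hi).1.symm.trans ((hpiece j n).1 hj).1))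
  have hdensity : ∀ j ∈ Finset.range k, HasNaturalDensity
      {n | Int.fract (a n) ∈ Set.Icc ((j + c) / k) ((j + d) / k)} ((d - c) / k) := by
    intro j hj
    have hjk : (j : ℝ) + 1 ≤ k := by exact_mod_cast Finset.mem_range.1 hj
    convert equidistributedMod1_iff_hasNaturalDensity.1 ha ((j + c) / k) ((j + d) / k)
      (by positivity) (by gcongr) ((div_le_one hk').2 (by linarith)) using 1
    ring
  rw [hunion]
  convert HasNaturalDensity.biUnion_finset hdisj hdensity using 1
  rw [Finset.sum_const, Finset.card_range, nsmul_eq_mul, mul_div_cancel₀ _ hk'.ne']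

end EquidistributedMod1

theorem sgn_eq_sign (t : ℝ) : sgn t = SignType.sign t := by
  rcases lt_trichotomy t 0 with ht | rfl | ht
  · simp [sgn, ht, ht.not_gt]
  · simp [sgn]
  · simp [sgn, ht]

theorem sgn_mul (s t : ℝ) : sgn (s * t) = sgn s * sgn t := by
  simp only [sgn_eq_sign, sign_mul, SignType.coe_mul]

theorem sgn_eq_zero_iff {t : ℝ} : sgn t = 0 ↔ t = 0 := by
  grind [sgn]

theorem sgn_eq_one_iff {t : ℝ} : sgn t = 1 ↔ 0 < t := by
  grind [sgn]

theorem sgn_mul_eq_sgn_left_iff {s t : ℝ} : sgn (s * t) = sgn s ↔ s = 0 ∨ 0 < t := by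
  obtain rfl | hs := eq_or_ne s 0
  · simp
  rw [sgn_mul, mul_eq_left₀ (sgn_eq_zero_iff.not.2 hs), sgn_eq_one_iff, or_iff_right hs]

theorem sgn_cos_three_mul_eq_iff (θ : ℝ) :
    sgn (cos (3 * θ)) = sgn (cos θ) ↔ cos θ = 0 ∨ 1 / 2 < cos (2 * θ) := by
  have hfactor : cos (3 * θ) = cos θ * (2 * cos (2 * θ) - 1) := by
    rw [cos_three_mul, cos_two_mul]
    ring
  rw [hfactor, sgn_mul_eq_sgn_left_iff, sub_pos, div_lt_iff₀' two_pos]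

theorem cos_two_pi_mul_fract (u : ℝ) : cos (2 * π * Int.fract u) = cos (2 * π * u) := by
  rw [← cos_sub_int_mul_two_pi (2 * π * u) ⌊u⌋, Int.fract]
  ring_nf

theorem cos_two_pi_mul_le_cos_two_pi_mul_iff {u v : ℝ} (hv : v ∈ Set.Icc 0 (1 / 2)) :
    cos (2 * π * u) ≤ cos (2 * π * v) ↔ Int.fract u ∈ Set.Icc v (1 - v) := by
  rw [← cos_two_pi_mul_fract u]
  have hu₀ := Int.fract_nonneg u
  have hu₁ := Int.fract_lt_one u
  generalize Int.fract u = x at hu₀ hu₁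
  wlog hx : x ≤ 1 / 2 generalizing x
  · have hreflect : cos (2 * π * (1 - x)) = cos (2 * π * x) := by
      rw [← cos_two_pi_sub]
      ring_nf
    rw [← hreflect]
    refine (this (1 - x) (by linarith) (by linarith) (by linarith)).trans ?_
    grind
  have hscale {w : ℝ} (hw : w ∈ Set.Icc 0 (1 / 2)) : 2 * π * w ∈ Set.Icc 0 π :=
    ⟨mul_nonneg two_pi_pos.le hw.1, by nlinarith [pi_pos, hw.2]⟩
  rw [strictAntiOn_cos.le_iff_ge (hscale ⟨hu₀, hx⟩) (hscale hv), mul_le_mul_iff_right₀ two_pi_pos,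
    Set.mem_Icc]
  exact ⟨fun h => ⟨h, by linarith [hv.2]⟩, And.left⟩

theorem cos_eq_zero_iff_cos_two_mul_le_neg_one {θ : ℝ} : cos θ = 0 ↔ cos (2 * θ) ≤ -1 := by
  rw [cos_two_mul, ← sq_nonpos_iff]
  constructor <;> intro h <;> linarith

theorem sgn_cos_three_mul_eq_iff_fract_notMem (x : ℝ) :
    sgn (cos (2 * π * (3 * x))) = sgn (cos (2 * π * x)) ↔
      Int.fract (2 * x) ∉ Set.Icc (1 / 6) (5 / 6) \ {1 / 2} := by
  have htriple : 2 * π * (3 * x) = 3 * (2 * π * x) := by ring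
  have hdouble : 2 * (2 * π * x) = 2 * π * (2 * x) := by ring
  have hsixth : cos (2 * π * (1 / 6)) = 1 / 2 := by
    rw [← cos_pi_div_three]
    ring_nf
  have hhalf : cos (2 * π * (1 / 2)) = -1 := by
    rw [← cos_pi]
    ring_nf
  have hle_half : cos (2 * π * (2 * x)) ≤ 1 / 2 ↔ Int.fract (2 * x) ∈ Set.Icc (1 / 6) (5 / 6) := by
    rw [← hsixth, cos_two_pi_mul_le_cos_two_pi_mul_iff (by norm_num)]
    norm_num
  have hzero : cos (2 * π * x) = 0 ↔ Int.fract (2 * x) = 1 / 2 := by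
    rw [cos_eq_zero_iff_cos_two_mul_le_neg_one, hdouble, ← hhalf,
      cos_two_pi_mul_le_cos_two_pi_mul_iff (by norm_num), sub_half, Set.Icc_self,
      Set.mem_singleton_iff]
  rw [htriple, sgn_cos_three_mul_eq_iff, hdouble, ← not_le, hle_half, hzero, Set.mem_sdiff,
    Set.mem_singleton_iff]
  tauto

theorem sign_correlation_lower_bound_attained
    (y : ℝ) (hy : y ≠ 0) (μ : ℕ → ℝ)
    (hequi : EquidistributedMod1 (fun n => μ n * y)) :
    Tendsto (fun N : ℕ =>
      (((Finset.range N).filter (fun n =>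
        sgn (Real.cos (2 * π * (3 * (μ n * y)))) = sgn (Real.cos (2 * π * (μ n * y))))).card : ℝ) / N)
      atTop (nhds (1/3)) := by
  have hdouble : EquidistributedMod1 fun n => 2 * (μ n * y) := by
    simpa using hequi.natCast_mul two_ne_zero
  have hband := equidistributedMod1_iff_hasNaturalDensity.1 hdouble (1 / 6) (5 / 6)
    (by norm_num) (by norm_num) (by norm_num)
  have hcenter := hdouble.hasNaturalDensity_fract_eq (1 / 2)
  have hsub : {n | Int.fract (2 * (μ n * y)) = 1 / 2} ⊆
      {n | Int.fract (2 * (μ n * y)) ∈ Set.Icc (1 / 6) (5 / 6)} := fun n hn => by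
    rw [Set.mem_ofPred_eq, hn.out]
    norm_num
  refine hasNaturalDensity_setOf_iff.1 ?_
  simp only [sgn_cos_three_mul_eq_iff_fract_notMem]
  convert (hband.diff hcenter hsub).compl using 1
  · rfl
  · norm_num
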